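/- Let d ≥ 1 be an integer and fix 1 ≤ p ≤ ∞ with p ≠ 2. A nonempty subset Λ of ℤ^d is a contractive projection set for L^p(𝕋^d) if and only if Λ is a coset in ℤ^d. -/

import Mathlib

/-!
Write `χ_α` for the character `z ↦ z^α`.

If `t` is a torsion point of the torus, averaging `χ_(-β)(nt) f(x + nt)` over `n` projects onto
the frequencies `α` with `χ_(α-β)(t) = 1`, and the triangle inequality makes this projection
contractive. Torsion points separate a subgroup `H` from its complement because `ℚ/ℤ` is injective,
so the coset `β + H` is an intersection of such frequency sets.

Conversely, let `γ, α, β ∈ Λ` and suppose that `η = α + β - γ ∉ Λ`. For `p < ∞`, the function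
`t ↦ ‖f + sχ_β + tχ_η‖_p` is minimal at `t = 0` for every `f` with frequencies in `Λ` and every `s`.
Differentiating this critical point equation in `s` gives `∫ |f|^(p-2) Re χ_(α-γ) = 0` for zero-free
`f`. With `f = 2χ_γ + χ_α` we have `|f|² = 5 + 4 Re χ_(α-γ)`, so for `p ≠ 2` the weight is strictly
monotone in `Re χ_(α-γ)`, which has mean zero: a contradiction. For `p = ∞`, the function
`χ_γ + χ_α + χ_β` attains the value `3`, while `|χ_γ + χ_α + χ_β - χ_η| ≤ √8` by the parallelogram
law. Hence `Λ` is closed under `α + β - γ`, that is, a coset.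
-/

open MeasureTheory
open scoped Classical ENNReal

noncomputable section

/-- The `d`-dimensional torus, modelled as `d` copies of `ℝ/ℤ`,
whose product `volume` measure is the normalized Haar measure. -/
abbrev Torus (d : ℕ) := Fin d → AddCircle (1 : ℝ)

/-- The character `z ↦ z^α` on the torus. -/
def torusChar {d : ℕ} (α : Fin d → ℤ) (x : Torus d) : ℂ :=
  ∏ j, fourier (α j) (x j)

/-- The trigonometric polynomial with frequencies in `F` and coefficients `a`. -/
def trigPoly {d : ℕ} (F : Finset (Fin d → ℤ)) (a : (Fin d → ℤ) → ℂ) (x : Torus d) : ℂ :=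
  ∑ α ∈ F, a α * torusChar α x

/-- The set `ℕ₀^d` of multi-indices with nonnegative entries. -/
def NN (d : ℕ) : Set (Fin d → ℤ) := {α | ∀ j, 0 ≤ α j}

/-- `Λ` is a coset in `ℤ^d`, i.e. a translate of a subgroup. -/
def IsCoset {d : ℕ} (Λ : Set (Fin d → ℤ)) : Prop :=
  ∃ (x : Fin d → ℤ) (H : AddSubgroup (Fin d → ℤ)),
    Λ = (x + ·) '' (H : Set (Fin d → ℤ))

/-- `Λ` is a contractive projection set for `L^p(𝕋^d)`:
the projection onto frequencies in `Λ` is contractive on trigonometric polynomials. -/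
def IsContractiveLp (d : ℕ) (p : ℝ≥0∞) (Λ : Set (Fin d → ℤ)) : Prop :=
  ∀ (F : Finset (Fin d → ℤ)) (a : (Fin d → ℤ) → ℂ),
    eLpNorm (trigPoly (F.filter (· ∈ Λ)) a) p volume ≤ eLpNorm (trigPoly F a) p volume

/-- `Γ` is a contractive projection set for `H^p(𝕋^d)`:
the projection onto frequencies in `Γ` is contractive on analytic polynomials. -/
def IsContractiveHp (d : ℕ) (p : ℝ≥0∞) (Γ : Set (Fin d → ℤ)) : Prop :=
  ∀ F : Finset (Fin d → ℤ), ↑F ⊆ NN d → ∀ a : (Fin d → ℤ) → ℂ,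
    eLpNorm (trigPoly (F.filter (· ∈ Γ)) a) p volume ≤ eLpNorm (trigPoly F a) p volume

/-- `Γ` has dimension `k`: the subgroup generated by the differences `γ - γ₀` has rank `k`. -/
def HasDim {d : ℕ} (Γ : Set (Fin d → ℤ)) (k : ℕ) : Prop :=
  ∀ γ₀ ∈ Γ, Module.finrank ℤ (Submodule.span ℤ ((· - γ₀) '' Γ)) = k

/-- `H^p(𝕋^d)` enjoys the contractive restriction property of dimension `k`:
every `k`-dimensional contractive projection set for `H^p(𝕋^d)` is the restriction
of a coset in `ℤ^d` to `ℕ₀^d`. -/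
def ContractiveRestrictionProperty (d : ℕ) (p : ℝ≥0∞) (k : ℕ) : Prop :=
  ∀ Γ : Set (Fin d → ℤ), Γ.Nonempty → Γ ⊆ NN d → HasDim Γ k → IsContractiveHp d p Γ →
    ∃ Λ : Set (Fin d → ℤ), IsCoset Λ ∧ Γ = Λ ∩ NN d

/-- The coset `Λ(Γ)` in `ℤ^d` generated by `Γ`. -/
def cosetGen {d : ℕ} (Γ : Set (Fin d → ℤ)) : Set (Fin d → ℤ) :=
  ⋃ γ₀ ∈ Γ, (γ₀ + ·) '' (AddSubgroup.closure ((· - γ₀) '' Γ) : Set (Fin d → ℤ))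

/-- The `n`-extension `E_n(Γ)`: all points of `Λ(Γ) ∩ ℕ₀^d` at distance at most `n` from `Γ`. -/
def Eext {d : ℕ} (n : ℕ) (Γ : Set (Fin d → ℤ)) : Set (Fin d → ℤ) :=
  {lam | lam ∈ cosetGen Γ ∩ NN d ∧ ∃ γ ∈ Γ, ∃ m : (Fin d → ℤ) →₀ ℤ,
    (↑m.support : Set (Fin d → ℤ)) ⊆ Γ \ {γ} ∧
    lam = γ + ∑ α ∈ m.support, m α • (α - γ) ∧
    (∑ α ∈ m.support, max (m α) 0) ≤ (n : ℤ) ∧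
    (∑ α ∈ m.support, max (-(m α)) 0) ≤ (n : ℤ)}

/-- Iterated `n`-extensions `E_n^k(Γ)`. -/
def EextIter {d : ℕ} (n : ℕ) : ℕ → Set (Fin d → ℤ) → Set (Fin d → ℤ)
  | 0, Γ => Eext n Γ
  | (k + 1), Γ => Eext n (EextIter n k Γ)

/-- The `n`-completion `E_n^∞(Γ)`. -/
def EextInf {d : ℕ} (n : ℕ) (Γ : Set (Fin d → ℤ)) : Set (Fin d → ℤ) :=
  ⋃ k, EextIter n k Γ

open Filter Function Set Topology
open scoped ComplexConjugate InnerProductSpace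

section CompactIntegral

variable {X E : Type*} [TopologicalSpace X] [CompactSpace X] [MeasurableSpace X]
  [OpensMeasurableSpace X] {μ : Measure X} [NormedAddCommGroup E]

lemma hasDerivAt_integral_of_continuousOn_uncurry [IsFiniteMeasure μ] [NormedSpace ℝ E]
    [SecondCountableTopologyEither X E] {F F' : ℝ → X → E} {U : Set ℝ} {t₀ : ℝ} (hU : U ∈ 𝓝 t₀)
    (hF : ∀ t ∈ U, Continuous (F t)) (hF' : ContinuousOn (uncurry F') (U ×ˢ univ))
    (hderiv : ∀ t ∈ U, ∀ x, HasDerivAt (F · x) (F' t x) t) :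
    HasDerivAt (fun t ↦ ∫ x, F t x ∂μ) (∫ x, F' t₀ x ∂μ) t₀ := by
  obtain ⟨K, hK, hKU, hKcompact⟩ := local_compact_nhds hU
  have hF'K : ContinuousOn (uncurry F') (K ×ˢ univ) :=
    hF'.mono (prod_mono hKU Subset.rfl)
  obtain ⟨C, hC⟩ := (hKcompact.prod isCompact_univ).exists_bound_of_continuousOn hF'K
  have hF't₀ : Continuous (F' t₀) :=
    hF'.comp_continuous (by fun_prop : Continuous fun x ↦ (t₀, x))
      fun x ↦ ⟨mem_of_mem_nhds hU, mem_univ x⟩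
  refine (hasDerivAt_integral_of_dominated_loc_of_deriv_le (bound := fun _ ↦ C) hK ?_ ?_
    hF't₀.aestronglyMeasurable ?_ (integrable_const C) ?_).2
  · filter_upwards [hU] with t ht using (hF t ht).aestronglyMeasurable
  · exact (hF t₀ (mem_of_mem_nhds hU)).integrable_of_hasCompactSupport
      (HasCompactSupport.of_compactSpace _)
  · exact ae_of_all _ fun x t ht ↦ hC (t, x) ⟨ht, mem_univ x⟩
  · exact ae_of_all _ fun x t ht ↦ hderiv t (hKU ht) x

lemma integral_norm_rpow_le_of_eLpNorm_le [IsFiniteMeasureOnCompacts μ]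
    [SecondCountableTopologyEither X E] {p : ℝ≥0∞} (hp0 : p ≠ 0) (hp_top : p ≠ ∞) {f g : X → E}
    (hf : Continuous f) (hg : Continuous g) (h : eLpNorm f p μ ≤ eLpNorm g p μ) :
    ∫ x, ‖f x‖ ^ p.toReal ∂μ ≤ ∫ x, ‖g x‖ ^ p.toReal ∂μ := by
  have hp : 0 < p.toReal := ENNReal.toReal_pos hp0 hp_top
  have memLp {u : X → E} (hu : Continuous u) : MemLp u p μ :=
    hu.memLp_of_hasCompactSupport (HasCompactSupport.of_compactSpace _)
  have nonneg (u : X → E) : 0 ≤ ∫ x, ‖u x‖ ^ p.toReal ∂μ :=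
    integral_nonneg fun x ↦ by positivity
  rw [(memLp hf).eLpNorm_eq_integral_rpow_norm hp0 hp_top,
    (memLp hg).eLpNorm_eq_integral_rpow_norm hp0 hp_top,
    ENNReal.ofReal_le_ofReal_iff (Real.rpow_nonneg (nonneg g) _)] at h
  exact (Real.rpow_le_rpow_iff (nonneg f) (nonneg g) (inv_pos.2 hp)).1 h

end CompactIntegral

lemma enorm_le_eLpNorm_top_of_continuous {X E : Type*} [TopologicalSpace X] [MeasurableSpace X]
    [NormedAddCommGroup E] {μ : Measure X} [μ.IsOpenPosMeasure] {f : X → E} (hf : Continuous f)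
    (x : X) : ‖f x‖ₑ ≤ eLpNorm f ∞ μ := by
  have hclosed : IsClosed {y | ‖f y‖ₑ ≤ eLpNorm f ∞ μ} := isClosed_le hf.enorm continuous_const
  have hdense : Dense {y | ‖f y‖ₑ ≤ eLpNorm f ∞ μ} :=
    Measure.dense_of_ae (by simpa only [eLpNorm_exponent_top] using ae_le_eLpNormEssSup)
  exact eq_univ_iff_forall.1 (hclosed.closure_eq ▸ hdense.closure_eq) x

lemma eventually_forall_add_smul_ne_zero {X E : Type*} [TopologicalSpace X] [CompactSpace X]
    [TopologicalSpace E] [T1Space E] [AddCommMonoid E] [ContinuousAdd E] [Module ℝ E]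
    [ContinuousSMul ℝ E] {f g : X → E} (hf : Continuous f) (hg : Continuous g)
    (hf0 : ∀ x, f x ≠ 0) : ∀ᶠ t : ℝ in 𝓝 0, ∀ x, f x + t • g x ≠ 0 := by
  have h := isCompact_univ.eventually_forall_of_forall_eventually (x₀ := (0 : ℝ))
    (K := (univ : Set X)) (P := fun t x ↦ f x + t • g x ≠ 0) fun x _ ↦
      ContinuousAt.eventually_ne (by fun_prop) (by simpa using hf0 x)
  simpa using h

section FirstVariation

variable {E : Type*} [NormedAddCommGroup E] [InnerProductSpace ℝ E]

lemma hasDerivAt_norm_add_smul_rpow {u v : E} {t : ℝ} (h : u + t • v ≠ 0) (q : ℝ) :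
    HasDerivAt (fun s : ℝ ↦ ‖u + s • v‖ ^ q)
      (q * ‖u + t • v‖ ^ (q - 2) * ⟪u + t • v, v⟫_ℝ) t := by
  have hnorm : 0 < ‖u + t • v‖ := norm_pos_iff.2 h
  have hline : HasDerivAt (fun s : ℝ ↦ u + s • v) v t := by
    simpa using ((hasDerivAt_id t).smul_const v).const_add u
  have hsq := hline.norm_sq.rpow_const (p := q / 2) (Or.inl (by positivity))
  convert! hsq using 1
  · funext s
    rw [← Real.rpow_natCast_mul (norm_nonneg _)]
    congr 1
    push_cast
    ring
  · rw [← Real.rpow_natCast_mul hnorm.le]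
    rw [show ((2 : ℕ) : ℝ) * (q / 2 - 1) = q - 2 by push_cast; ring]
    ring

lemma hasDerivAt_norm_add_smul_rpow_mul_inner {u v : E} {t : ℝ} (h : u + t • v ≠ 0) (w : E)
    (q : ℝ) :
    HasDerivAt (fun s : ℝ ↦ ‖u + s • v‖ ^ q * ⟪u + s • v, w⟫_ℝ)
      (q * ‖u + t • v‖ ^ (q - 2) * ⟪u + t • v, v⟫_ℝ * ⟪u + t • v, w⟫_ℝ
        + ‖u + t • v‖ ^ q * ⟪v, w⟫_ℝ) t := by
  refine (hasDerivAt_norm_add_smul_rpow h q).mul ?_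
  have hline : HasDerivAt (fun s : ℝ ↦ u + s • v) v t := by
    simpa using ((hasDerivAt_id t).smul_const v).const_add u
  simpa using hline.inner ℝ (hasDerivAt_const t w)

variable {X : Type*} [TopologicalSpace X] [CompactSpace X] [MeasurableSpace X]
  [OpensMeasurableSpace X] {μ : Measure X} [IsFiniteMeasure μ]

lemma hasDerivAt_integral_norm_add_smul_rpow {f g : X → E} (hf : Continuous f)
    (hg : Continuous g) (hf0 : ∀ x, f x ≠ 0) (q : ℝ) :
    HasDerivAt (fun t : ℝ ↦ ∫ x, ‖f x + t • g x‖ ^ q ∂μ)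
      (∫ x, q * ‖f x‖ ^ (q - 2) * ⟪f x, g x⟫_ℝ ∂μ) 0 := by
  have key := hasDerivAt_integral_of_continuousOn_uncurry (μ := μ)
    (eventually_forall_add_smul_ne_zero hf hg hf0)
    (F := fun t x ↦ ‖f x + t • g x‖ ^ q)
    (F' := fun t x ↦ q * ‖f x + t • g x‖ ^ (q - 2) * ⟪f x + t • g x, g x⟫_ℝ)
    (fun t ht ↦ Continuous.rpow_const (by fun_prop) fun x ↦ Or.inl (norm_ne_zero_iff.2 (ht x)))
    (((continuousOn_const.mul (ContinuousOn.rpow_const (by fun_prop)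
      fun y hy ↦ Or.inl (norm_ne_zero_iff.2 (hy.1 y.2))))).mul (by fun_prop))
    (fun t ht x ↦ hasDerivAt_norm_add_smul_rpow (ht x) q)
  simpa using key

lemma hasDerivAt_integral_norm_add_smul_rpow_mul_inner {f g h : X → E} (hf : Continuous f)
    (hg : Continuous g) (hh : Continuous h) (hf0 : ∀ x, f x ≠ 0) (q : ℝ) :
    HasDerivAt (fun t : ℝ ↦ ∫ x, ‖f x + t • g x‖ ^ q * ⟪f x + t • g x, h x⟫_ℝ ∂μ)
      (∫ x, (q * ‖f x‖ ^ (q - 2) * ⟪f x, g x⟫_ℝ * ⟪f x, h x⟫_ℝ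
        + ‖f x‖ ^ q * ⟪g x, h x⟫_ℝ) ∂μ) 0 := by
  have rpowOn (r : ℝ) : ContinuousOn (fun y : ℝ × X ↦ ‖f y.2 + y.1 • g y.2‖ ^ r)
      ({t | ∀ x, f x + t • g x ≠ 0} ×ˢ univ) :=
    ContinuousOn.rpow_const (by fun_prop) fun y hy ↦ Or.inl (norm_ne_zero_iff.2 (hy.1 y.2))
  have key := hasDerivAt_integral_of_continuousOn_uncurry (μ := μ)
    (eventually_forall_add_smul_ne_zero hf hg hf0)
    (F := fun t x ↦ ‖f x + t • g x‖ ^ q * ⟪f x + t • g x, h x⟫_ℝ)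
    (F' := fun t x ↦ q * ‖f x + t • g x‖ ^ (q - 2) * ⟪f x + t • g x, g x⟫_ℝ
      * ⟪f x + t • g x, h x⟫_ℝ + ‖f x + t • g x‖ ^ q * ⟪g x, h x⟫_ℝ)
    (fun t ht ↦ (Continuous.rpow_const (by fun_prop)
      fun x ↦ Or.inl (norm_ne_zero_iff.2 (ht x))).mul (by fun_prop))
    ((((continuousOn_const.mul (rpowOn (q - 2))).mul (by fun_prop)).mul (by fun_prop)).add
      ((rpowOn q).mul (by fun_prop)))
    (fun t ht x ↦ hasDerivAt_norm_add_smul_rpow_mul_inner (ht x) (h x) q)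
  simpa using key

lemma integral_norm_rpow_mul_inner_eq_zero {f g : X → E} (hf : Continuous f) (hg : Continuous g)
    (hf0 : ∀ x, f x ≠ 0) {q : ℝ} (hq : q ≠ 0)
    (hmin : ∀ t : ℝ, ∫ x, ‖f x‖ ^ q ∂μ ≤ ∫ x, ‖f x + t • g x‖ ^ q ∂μ) :
    ∫ x, ‖f x‖ ^ (q - 2) * ⟪f x, g x⟫_ℝ ∂μ = 0 := by
  have hlocal : IsLocalMin (fun t : ℝ ↦ ∫ x, ‖f x + t • g x‖ ^ q ∂μ) 0 :=
    Eventually.of_forall fun t ↦ by simpa using hmin t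
  have hderiv := hlocal.hasDerivAt_eq_zero (hasDerivAt_integral_norm_add_smul_rpow hf hg hf0 q)
  simp_rw [mul_assoc, integral_const_mul] at hderiv
  exact (mul_eq_zero.1 hderiv).resolve_left hq

lemma integral_norm_rpow_mul_inner_mul_inner_add_eq_zero {f g h : X → E} (hf : Continuous f)
    (hg : Continuous g) (hh : Continuous h) (hf0 : ∀ x, f x ≠ 0) {q : ℝ} (hq : q ≠ 0)
    (hmin : ∀ s t : ℝ,
      ∫ x, ‖f x + s • g x‖ ^ q ∂μ ≤ ∫ x, ‖f x + s • g x + t • h x‖ ^ q ∂μ) :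
    ∫ x, ((q - 2) * ‖f x‖ ^ (q - 2 - 2) * ⟪f x, g x⟫_ℝ * ⟪f x, h x⟫_ℝ
      + ‖f x‖ ^ (q - 2) * ⟪g x, h x⟫_ℝ) ∂μ = 0 := by
  have hvanish : (fun s : ℝ ↦ ∫ x, ‖f x + s • g x‖ ^ (q - 2) * ⟪f x + s • g x, h x⟫_ℝ ∂μ)
      =ᶠ[𝓝 0] fun _ ↦ 0 := by
    filter_upwards [eventually_forall_add_smul_ne_zero hf hg hf0] with s hs
    exact integral_norm_rpow_mul_inner_eq_zero (by fun_prop) hh hs hq (hmin s)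
  exact (hasDerivAt_integral_norm_add_smul_rpow_mul_inner hf hg hh hf0 (q - 2)).unique
    ((hasDerivAt_const 0 0).congr_of_eventuallyEq hvanish)

end FirstVariation

section ComplexVariation

lemma complex_inner_mul_inner_add_inner_I_smul_mul_inner_I_smul (u v w : ℂ) :
    ⟪u, v⟫_ℝ * ⟪u, w⟫_ℝ + ⟪u, Complex.I * v⟫_ℝ * ⟪u, Complex.I * w⟫_ℝ = ‖u‖ ^ 2 * ⟪v, w⟫_ℝ := by
  simp only [Complex.inner, Complex.sq_norm, Complex.normSq_apply, Complex.mul_re, Complex.mul_im,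
    Complex.conj_re, Complex.conj_im, Complex.I_re, Complex.I_im]
  ring

variable {X : Type*} [TopologicalSpace X] [CompactSpace X] [MeasurableSpace X]
  [OpensMeasurableSpace X] {μ : Measure X} [IsFiniteMeasure μ]

/-- Over `ℂ`, adding the second variations in the directions `(g, h)` and `(I g, I h)` collapses the
products `⟪f, g⟫ ⟪f, h⟫` to `‖f‖ ^ 2 ⟪g, h⟫`, so that the total is
`q * ∫ ‖f‖ ^ (q - 2) ⟪g, h⟫`. -/
lemma integral_norm_rpow_mul_inner_eq_zero_of_complex {f g h : X → ℂ} (hf : Continuous f)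
    (hg : Continuous g) (hh : Continuous h) (hf0 : ∀ x, f x ≠ 0) {q : ℝ} (hq : q ≠ 0)
    (hmin : ∀ s t : ℂ, ∫ x, ‖f x + s * g x‖ ^ q ∂μ ≤ ∫ x, ‖f x + s * g x + t * h x‖ ^ q ∂μ) :
    ∫ x, ‖f x‖ ^ (q - 2) * ⟪g x, h x⟫_ℝ ∂μ = 0 := by
  let D (c : ℂ) (x : X) : ℝ :=
    (q - 2) * ‖f x‖ ^ (q - 2 - 2) * ⟪f x, c * g x⟫_ℝ * ⟪f x, c * h x⟫_ℝ
      + ‖f x‖ ^ (q - 2) * ⟪c * g x, c * h x⟫_ℝ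
  have rpow_continuous (r : ℝ) : Continuous fun x ↦ ‖f x‖ ^ r :=
    hf.norm.rpow_const fun x ↦ Or.inl (norm_ne_zero_iff.2 (hf0 x))
  have D_integrable (c : ℂ) : Integrable (D c) μ := by
    have := rpow_continuous (q - 2 - 2)
    have := rpow_continuous (q - 2)
    exact Continuous.integrable_of_hasCompactSupport (by fun_prop)
      (HasCompactSupport.of_compactSpace _)
  have integral_D (c : ℂ) : ∫ x, D c x ∂μ = 0 :=
    integral_norm_rpow_mul_inner_mul_inner_add_eq_zero hf (by fun_prop) (by fun_prop) hf0 hq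
      fun s t ↦ by simpa only [Complex.real_smul, mul_assoc] using hmin (s * c) (t * c)
  have D_add (x : X) : D 1 x + D Complex.I x = q * (‖f x‖ ^ (q - 2) * ⟪g x, h x⟫_ℝ) := by
    have hrpow : ‖f x‖ ^ (q - 2) = ‖f x‖ ^ (q - 2 - 2) * ‖f x‖ ^ 2 := by
      rw [← Real.rpow_add_natCast (norm_ne_zero_iff.2 (hf0 x))]
      norm_num
    have hrot := complex_inner_mul_inner_add_inner_I_smul_mul_inner_I_smul (f x) (g x) (h x)
    have hisom : ⟪Complex.I * g x, Complex.I * h x⟫_ℝ = ⟪g x, h x⟫_ℝ := by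
      simp [Complex.inner]
    simp only [D, one_mul, hisom, hrpow]
    linear_combination (q - 2) * ‖f x‖ ^ (q - 2 - 2) * hrot
  have hsum := integral_add (D_integrable 1) (D_integrable Complex.I)
  rw [integral_D, integral_D] at hsum
  simp_rw [D_add, integral_const_mul] at hsum
  simpa [hq] using hsum

end ComplexVariation

lemma norm_one_add_add_mul_one_sub_le {z w : ℂ} (hz : ‖z‖ = 1) (hw : ‖w‖ = 1) :
    ‖1 + z + w * (1 - z)‖ ≤ √8 := by
  have hpar : ‖1 + z‖ ^ 2 + ‖1 - z‖ ^ 2 = 4 := by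
    have := parallelogram_law_with_norm ℝ 1 z
    rw [norm_one, hz] at this
    linarith
  refine Real.le_sqrt_of_sq_le ?_
  calc ‖1 + z + w * (1 - z)‖ ^ 2
      ≤ (‖1 + z‖ + ‖1 - z‖) ^ 2 := by
        gcongr
        simpa [hw] using norm_add_le (1 + z) (w * (1 - z))
    _ ≤ 2 * (‖1 + z‖ ^ 2 + ‖1 - z‖ ^ 2) := add_sq_le
    _ = 8 := by rw [hpar]; norm_num

lemma exists_addMonoidHom_addCircle_ne_zero_forall_isOfFinAddOrder {A : Type*} [AddCommGroup A]
    {a : A} (ha : a ≠ 0) : ∃ φ : A →+ AddCircle (1 : ℝ), φ a ≠ 0 ∧ ∀ b, IsOfFinAddOrder (φ b) := by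
  let ι : AddCircle (1 : ℚ) →+ AddCircle (1 : ℝ) :=
    QuotientAddGroup.map _ _ (Rat.castHom ℝ).toAddMonoidHom
      (AddSubgroup.zmultiples_le_of_mem (AddSubgroup.mem_comap.2 (by simp)))
  have ι_injective : Function.Injective ι := by
    refine (injective_iff_map_eq_zero ι).2 fun y hy ↦ ?_
    obtain ⟨r, rfl⟩ := QuotientAddGroup.mk_surjective y
    obtain ⟨n, hn⟩ := (AddCircle.coe_eq_zero_iff _).1 hy
    have hnr : ((n : ℚ) : ℝ) = r := by simpa using hn
    exact (AddCircle.coe_eq_zero_iff _).2 ⟨n, by simpa using Rat.cast_injective hnr⟩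
  have ι_finite (y : AddCircle (1 : ℚ)) : IsOfFinAddOrder (ι y) := by
    obtain ⟨r, rfl⟩ := QuotientAddGroup.mk_surjective y
    exact AddCircle.isOfFinAddOrder_iff_exists_rat_eq_div.2 ⟨r, by simp⟩
  obtain ⟨c, hc⟩ := CharacterModule.exists_character_apply_ne_zero_of_ne_zero ha
  exact ⟨ι.comp c, (map_ne_zero_iff ι ι_injective).2 hc, fun b ↦ ι_finite (c b)⟩

section TorusChar

variable {d : ℕ}

lemma continuous_torusChar (α : Fin d → ℤ) : Continuous (torusChar α) :=
  continuous_finsetProd _ fun j _ ↦ (fourier (α j)).continuous.comp (continuous_apply j)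

lemma norm_torusChar (α : Fin d → ℤ) (x : Torus d) : ‖torusChar α x‖ = 1 := by
  simp [torusChar, norm_prod, Circle.norm_coe]

lemma torusChar_add (α β : Fin d → ℤ) (x : Torus d) :
    torusChar (α + β) x = torusChar α x * torusChar β x := by
  simp only [torusChar, Pi.add_apply, fourier_add, Finset.prod_mul_distrib]

lemma torusChar_eq_mul_torusChar_sub (α β : Fin d → ℤ) (x : Torus d) :
    torusChar β x = torusChar α x * torusChar (β - α) x := by
  rw [← torusChar_add, add_sub_cancel]

lemma torusChar_apply_add (α : Fin d → ℤ) (x y : Torus d) :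
    torusChar α (x + y) = torusChar α x * torusChar α y := by
  simp [torusChar, AddCircle.toCircle_add, Finset.prod_mul_distrib]

lemma torusChar_apply_zero (α : Fin d → ℤ) : torusChar α (0 : Torus d) = 1 := by
  simp [torusChar]

lemma torusChar_apply_nsmul (α : Fin d → ℤ) (n : ℕ) (x : Torus d) :
    torusChar α (n • x) = torusChar α x ^ n := by
  induction n with
  | zero => simp [torusChar_apply_zero]
  | succ n ih => rw [succ_nsmul, torusChar_apply_add, ih, pow_succ]

lemma re_torusChar_mem_Icc (α : Fin d → ℤ) (x : Torus d) : (torusChar α x).re ∈ Icc (-1) 1 :=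
  abs_le.1 ((Complex.abs_re_le_norm _).trans (norm_torusChar α x).le)

lemma conj_torusChar_mul_self (α : Fin d → ℤ) (x : Torus d) :
    conj (torusChar α x) * torusChar α x = 1 := by
  simp [Complex.conj_mul', norm_torusChar]

lemma inner_torusChar (α β : Fin d → ℤ) (x : Torus d) :
    ⟪torusChar α x, torusChar β x⟫_ℝ = (torusChar (β - α) x).re := by
  rw [Complex.inner, torusChar_eq_mul_torusChar_sub α β, mul_comm, ← mul_assoc,
    conj_torusChar_mul_self, one_mul]

lemma norm_two_mul_torusChar_add_sq (γ α : Fin d → ℤ) (x : Torus d) :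
    ‖2 * torusChar γ x + torusChar α x‖ ^ 2 = 5 + 4 * (torusChar (α - γ) x).re := by
  have hunit : (torusChar (α - γ) x).re ^ 2 + (torusChar (α - γ) x).im ^ 2 = 1 := by
    rw [sq, sq, ← Complex.normSq_apply, ← Complex.sq_norm, norm_torusChar, one_pow]
  rw [torusChar_eq_mul_torusChar_sub γ α, mul_comm 2, ← mul_add, norm_mul, norm_torusChar,
    one_mul, Complex.sq_norm, Complex.normSq_apply]
  simp only [Complex.add_re, Complex.re_ofNat, Complex.add_im, Complex.im_ofNat, zero_add]
  linear_combination hunit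

lemma norm_torusChar_add_add_sub_le (γ α β : Fin d → ℤ) (x : Torus d) :
    ‖torusChar γ x + torusChar α x + torusChar β x - torusChar (α + β - γ) x‖ ≤ √8 := by
  have hη : torusChar (α + β - γ) x
      = torusChar γ x * (torusChar (α - γ) x * torusChar (β - γ) x) := by
    rw [← torusChar_add, ← torusChar_add]
    congr 1
    abel
  have factor : torusChar γ x + torusChar α x + torusChar β x - torusChar (α + β - γ) x
      = torusChar γ x
        * (1 + torusChar (α - γ) x + torusChar (β - γ) x * (1 - torusChar (α - γ) x)) := by
    rw [hη, torusChar_eq_mul_torusChar_sub γ α, torusChar_eq_mul_torusChar_sub γ β]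
    ring
  rw [factor, norm_mul, norm_torusChar, one_mul]
  exact norm_one_add_add_mul_one_sub_le (norm_torusChar _ _) (norm_torusChar _ _)

lemma torusChar_apply_single_eq_toCircle (φ : (Fin d → ℤ) →+ AddCircle (1 : ℝ))
    (α : Fin d → ℤ) :
    torusChar α (fun j ↦ φ (Pi.single j 1)) = (AddCircle.toCircle (φ α) : ℂ) := by
  have toCircle_sum (s : Finset (Fin d)) (y : Torus d) :
      ((∑ j ∈ s, y j).toCircle : ℂ) = ∏ j ∈ s, ((y j).toCircle : ℂ) := by
    induction s using Finset.induction_on with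
    | empty => simp
    | insert i s hi ih => simp [hi, AddCircle.toCircle_add, ih]
  have hα : φ α = ∑ j, α j • φ (Pi.single j 1) := by
    conv_lhs => rw [← Finset.univ_sum_single α]
    simp only [map_sum, ← map_zsmul, ← Pi.single_smul, smul_eq_mul, mul_one]
  rw [hα, toCircle_sum]
  simp [torusChar]

lemma exists_torsion_point_separating (H : AddSubgroup (Fin d → ℤ)) {α : Fin d → ℤ}
    (hα : α ∉ H) :
    ∃ t : Torus d, IsOfFinAddOrder t ∧ (∀ β ∈ H, torusChar β t = 1) ∧ torusChar α t ≠ 1 := by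
  have hα' : QuotientAddGroup.mk' H α ≠ 0 := (QuotientAddGroup.eq_zero_iff α).not.2 hα
  obtain ⟨φ, hφα, hφ⟩ := exists_addMonoidHom_addCircle_ne_zero_forall_isOfFinAddOrder hα'
  let ψ := φ.comp (QuotientAddGroup.mk' H)
  refine ⟨fun j ↦ ψ (Pi.single j 1), IsOfFinAddOrder.pi fun j ↦ hφ _, fun β hβ ↦ ?_, ?_⟩
  · have hψβ : ψ β = 0 := by
      rw [AddMonoidHom.comp_apply, QuotientAddGroup.mk'_apply,
        (QuotientAddGroup.eq_zero_iff β).2 hβ, map_zero]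
    rw [torusChar_apply_single_eq_toCircle, hψβ, AddCircle.toCircle_zero, Circle.coe_one]
  · rw [torusChar_apply_single_eq_toCircle, ← Circle.coe_one, Ne, Circle.coe_inj,
      ← AddCircle.toCircle_zero]
    exact (AddCircle.injective_toCircle one_ne_zero).ne hφα

lemma integral_torusChar_eq_zero {α : Fin d → ℤ} (hα : α ≠ 0) :
    ∫ x : Torus d, torusChar α x = 0 := by
  obtain ⟨t, -, -, ht⟩ := exists_torsion_point_separating ⊥ (by simpa using hα)
  have htranslate := integral_add_right_eq_self (μ := (volume : Measure (Torus d))) (torusChar α) t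
  simp_rw [torusChar_apply_add, integral_mul_const] at htranslate
  exact by_contra fun h ↦ ht ((mul_eq_left₀ h).1 htranslate)

lemma integral_re_torusChar_eq_zero {α : Fin d → ℤ} (hα : α ≠ 0) :
    ∫ x : Torus d, (torusChar α x).re = 0 := by
  have hint : Integrable (torusChar α : Torus d → ℂ) :=
    (continuous_torusChar α).integrable_of_hasCompactSupport (HasCompactSupport.of_compactSpace _)
  simpa [integral_torusChar_eq_zero hα] using integral_re hint

lemma integral_comp_re_torusChar_mul_re_pos {φ : ℝ → ℝ} (hφ : StrictMonoOn φ (Icc (-1) 1))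
    (hφc : ContinuousOn φ (Icc (-1) 1)) {α : Fin d → ℤ} (hα : α ≠ 0) :
    0 < ∫ x : Torus d, φ (torusChar α x).re * (torusChar α x).re := by
  have hre : Continuous fun x : Torus d ↦ (torusChar α x).re :=
    Complex.continuous_re.comp (continuous_torusChar α)
  have hφre : Continuous fun x : Torus d ↦ φ (torusChar α x).re :=
    hφc.comp_continuous hre (re_torusChar_mem_Icc α)
  have zero_mem : (0 : ℝ) ∈ Icc (-1 : ℝ) 1 := by norm_num
  have hnonneg (x : Torus d) : 0 ≤ (φ (torusChar α x).re - φ 0) * (torusChar α x).re := by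
    rcases le_total 0 (torusChar α x).re with h | h
    · exact mul_nonneg (sub_nonneg.2 (hφ.monotoneOn zero_mem (re_torusChar_mem_Icc α x) h)) h
    · exact mul_nonneg_of_nonpos_of_nonpos
        (sub_nonpos.2 (hφ.monotoneOn (re_torusChar_mem_Icc α x) zero_mem h)) h
  have hne : (φ (torusChar α (0 : Torus d)).re - φ 0) * (torusChar α (0 : Torus d)).re ≠ 0 := by
    have : φ 0 < φ 1 := hφ zero_mem (by norm_num) one_pos
    simpa [torusChar_apply_zero, sub_eq_zero] using this.ne'
  have hpos : 0 < ∫ x : Torus d, (φ (torusChar α x).re - φ 0) * (torusChar α x).re :=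
    Continuous.integral_pos_of_hasCompactSupport_nonneg_nonzero
      ((hφre.sub continuous_const).mul hre) (HasCompactSupport.of_compactSpace _) hnonneg hne
  have integrable {f : Torus d → ℝ} (hf : Continuous f) : Integrable f :=
    hf.integrable_of_hasCompactSupport (HasCompactSupport.of_compactSpace _)
  calc 0 < ∫ x : Torus d, (φ (torusChar α x).re - φ 0) * (torusChar α x).re := hpos
    _ = (∫ x : Torus d, φ (torusChar α x).re * (torusChar α x).re)
          - φ 0 * ∫ x : Torus d, (torusChar α x).re := by
        simp_rw [sub_mul, ← integral_const_mul]
        exact integral_sub (integrable (hφre.mul hre)) (integrable (hre.const_mul _))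
    _ = ∫ x : Torus d, φ (torusChar α x).re * (torusChar α x).re := by
        rw [integral_re_torusChar_eq_zero hα, mul_zero, sub_zero]

lemma integral_rpow_mul_re_torusChar_ne_zero {s : ℝ} (hs : s ≠ 0) {α : Fin d → ℤ} (hα : α ≠ 0) :
    ∫ x : Torus d, (5 + 4 * (torusChar α x).re) ^ s * (torusChar α x).re ≠ 0 := by
  have hbase {r : ℝ} (hr : r ∈ Icc (-1) 1) : 0 < 5 + 4 * r := by linarith [hr.1]
  have hcont : ContinuousOn (fun r : ℝ ↦ (5 + 4 * r) ^ s) (Icc (-1) 1) :=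
    ContinuousOn.rpow_const (by fun_prop) fun r hr ↦ Or.inl (hbase hr).ne'
  rcases hs.lt_or_gt with hneg | hpos
  · have hmono : StrictMonoOn (fun r : ℝ ↦ -(5 + 4 * r) ^ s) (Icc (-1) 1) := fun r hr r' _ hlt ↦
      neg_lt_neg (Real.rpow_lt_rpow_of_neg (hbase hr) (by linarith) hneg)
    have h := integral_comp_re_torusChar_mul_re_pos hmono hcont.neg hα
    simp_rw [neg_mul, integral_neg] at h
    exact (neg_pos.1 h).ne
  · have hmono : StrictMonoOn (fun r : ℝ ↦ (5 + 4 * r) ^ s) (Icc (-1) 1) := fun r hr r' _ hlt ↦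
      Real.rpow_lt_rpow (hbase hr).le (by linarith) hpos
    exact (integral_comp_re_torusChar_mul_re_pos hmono hcont hα).ne'

end TorusChar

section TrigPoly

variable {d : ℕ}

lemma continuous_trigPoly (F : Finset (Fin d → ℤ)) (a : (Fin d → ℤ) → ℂ) :
    Continuous (trigPoly F a) :=
  continuous_finsetSum _ fun α _ ↦ (continuous_torusChar α).const_mul (a α)

lemma eLpNorm_torusChar_mul_trigPoly_add (p : ℝ≥0∞) (F : Finset (Fin d → ℤ))
    (a : (Fin d → ℤ) → ℂ) (β : Fin d → ℤ) (t : Torus d) :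
    eLpNorm (fun y ↦ torusChar β t * trigPoly F a (y + t)) p volume
      = eLpNorm (trigPoly F a) p volume := by
  calc eLpNorm (fun y ↦ torusChar β t * trigPoly F a (y + t)) p volume
      = eLpNorm (trigPoly F a ∘ (· + t)) p volume :=
        eLpNorm_congr_norm_ae (ae_of_all _ fun y ↦ by simp [norm_torusChar])
    _ = eLpNorm (trigPoly F a) p volume :=
        eLpNorm_comp_measurePreserving (continuous_trigPoly F a).aestronglyMeasurable
          (measurePreserving_add_right volume t)

lemma sum_range_torusChar_apply_nsmul {N : ℕ} {t : Torus d} (ht : N • t = 0) (α : Fin d → ℤ) :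
    ∑ n ∈ Finset.range N, torusChar α (n • t) = if torusChar α t = 1 then (N : ℂ) else 0 := by
  simp_rw [torusChar_apply_nsmul]
  split_ifs with h
  · simp [h]
  · rw [geom_sum_eq h, ← torusChar_apply_nsmul, ht, torusChar_apply_zero, sub_self, zero_div]

lemma sum_range_torusChar_mul_trigPoly_add {N : ℕ} {t : Torus d} (ht : N • t = 0)
    (F : Finset (Fin d → ℤ)) (a : (Fin d → ℤ) → ℂ) (β : Fin d → ℤ) (y : Torus d) :
    ∑ n ∈ Finset.range N, torusChar (-β) (n • t) * trigPoly F a (y + n • t)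
      = N * trigPoly (F.filter fun α ↦ torusChar (α - β) t = 1) a y := by
  have hterm (n : ℕ) (α : Fin d → ℤ) :
      torusChar (-β) (n • t) * (a α * torusChar α (y + n • t))
        = a α * torusChar α y * torusChar (α - β) (n • t) := by
    rw [torusChar_apply_add, sub_eq_add_neg, torusChar_add]
    ring
  simp_rw [trigPoly, Finset.mul_sum, hterm]
  rw [Finset.sum_comm, Finset.sum_filter]
  refine Finset.sum_congr rfl fun α _ ↦ ?_
  rw [← Finset.mul_sum, sum_range_torusChar_apply_nsmul ht]
  split_ifs <;> ring

lemma isContractiveLp_setOf_torusChar_sub_eq_one {p : ℝ≥0∞} (hp : 1 ≤ p) {t : Torus d}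
    (ht : IsOfFinAddOrder t) (β : Fin d → ℤ) :
    IsContractiveLp d p {α | torusChar (α - β) t = 1} := by
  intro F a
  let N := addOrderOf t
  have hN : N ≠ 0 := ht.addOrderOf_pos.ne'
  let g (n : ℕ) (y : Torus d) : ℂ := torusChar (-β) (n • t) * trigPoly F a (y + n • t)
  have hg (n : ℕ) : AEStronglyMeasurable (g n) volume := by
    have := continuous_trigPoly F a
    exact Continuous.aestronglyMeasurable (by fun_prop)
  have hsum : ∑ n ∈ Finset.range N, g n
      = (N : ℂ) • trigPoly (F.filter (· ∈ {α | torusChar (α - β) t = 1})) a := by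
    funext y
    simpa [g] using
      sum_range_torusChar_mul_trigPoly_add (addOrderOf_nsmul_eq_zero t) F a β y
  have hle : N * eLpNorm (trigPoly (F.filter (· ∈ {α | torusChar (α - β) t = 1})) a) p volume
      ≤ N * eLpNorm (trigPoly F a) p volume :=
    calc _ = eLpNorm (∑ n ∈ Finset.range N, g n) p volume := by
          rw [hsum, eLpNorm_const_smul, ← ofReal_norm, Complex.norm_natCast,
            ENNReal.ofReal_natCast]
      _ ≤ ∑ n ∈ Finset.range N, eLpNorm (g n) p volume := eLpNorm_sum_le (fun n _ ↦ hg n) hp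
      _ = N * eLpNorm (trigPoly F a) p volume := by
          simp [g, eLpNorm_torusChar_mul_trigPoly_add]
  exact (ENNReal.mul_le_mul_iff_right (Nat.cast_ne_zero.2 hN) (ENNReal.natCast_ne_top N)).1 hle

lemma IsContractiveLp.iInter {ι : Type*} {p : ℝ≥0∞} {Λ : ι → Set (Fin d → ℤ)}
    (h : ∀ i, IsContractiveLp d p (Λ i)) : IsContractiveLp d p (⋂ i, Λ i) := by
  intro F a
  induction F using Finset.strongInduction with
  | H F ih =>
    by_cases hF : ∀ α ∈ F, α ∈ ⋂ i, Λ i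
    · rw [Finset.filter_true_of_mem hF]
    · push Not at hF
      obtain ⟨α, hαF, hα⟩ := hF
      obtain ⟨i, hi⟩ := not_forall.1 (mem_iInter.not.1 hα)
      have hfilter : (F.filter (· ∈ Λ i)).filter (· ∈ ⋂ i, Λ i) = F.filter (· ∈ ⋂ i, Λ i) := by
        rw [Finset.filter_filter]
        exact Finset.filter_congr fun β _ ↦ and_iff_right_of_imp fun hβ ↦ mem_iInter.1 hβ i
      have hsub := ih _ (Finset.filter_ssubset.2 ⟨α, hαF, hi⟩)
      rw [hfilter] at hsub
      exact hsub.trans (h i F a)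

lemma IsCoset.isContractiveLp {p : ℝ≥0∞} (hp : 1 ≤ p) {Λ : Set (Fin d → ℤ)} (hΛ : IsCoset Λ) :
    IsContractiveLp d p Λ := by
  obtain ⟨β, H, rfl⟩ := hΛ
  let T := {t : Torus d // IsOfFinAddOrder t ∧ ∀ γ ∈ H, torusChar γ t = 1}
  have hcoset : (β + ·) '' (H : Set (Fin d → ℤ))
      = ⋂ t : T, {α | torusChar (α - β) (t : Torus d) = 1} := by
    ext α
    have hmem : α ∈ (β + ·) '' (H : Set (Fin d → ℤ)) ↔ α - β ∈ H := by
      simp [image_add_left, sub_eq_neg_add]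
    rw [hmem, mem_iInter]
    refine ⟨fun hα t ↦ t.2.2 _ hα, fun hα ↦ by_contra fun hnot ↦ ?_⟩
    obtain ⟨t, ht, htH, htα⟩ := exists_torsion_point_separating H hnot
    exact htα (hα ⟨t, ht, htH⟩)
  rw [hcoset]
  exact IsContractiveLp.iInter fun t ↦ isContractiveLp_setOf_torusChar_sub_eq_one hp t.2.1 β

end TrigPoly

section Contractive

variable {d : ℕ}

/-- The space of trigonometric polynomials whose frequencies all lie in `Λ`, encoded as a span of
characters, so that contractivity becomes `‖f‖ ≤ ‖f + g‖` for `f` with frequencies in `Λ` and `g`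
with frequencies in `Λᶜ`, with no mention of coefficients. -/
def trigPolySpace (Λ : Set (Fin d → ℤ)) : Submodule ℂ (Torus d → ℂ) :=
  Submodule.span ℂ (torusChar '' Λ)

lemma torusChar_mem_trigPolySpace {Λ : Set (Fin d → ℤ)} {α : Fin d → ℤ} (hα : α ∈ Λ) :
    torusChar α ∈ trigPolySpace Λ :=
  Submodule.subset_span (mem_image_of_mem _ hα)

lemma continuous_of_mem_trigPolySpace {Λ : Set (Fin d → ℤ)} {f : Torus d → ℂ}
    (hf : f ∈ trigPolySpace Λ) : Continuous f := by
  induction hf using Submodule.span_induction with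
  | mem f hf => obtain ⟨α, -, rfl⟩ := hf; exact continuous_torusChar α
  | zero => exact continuous_zero
  | add f g _ _ hf hg => exact hf.add hg
  | smul c f _ hf => exact hf.const_smul c

lemma exists_trigPoly_eq_of_mem_trigPolySpace {Λ : Set (Fin d → ℤ)} {f : Torus d → ℂ}
    (hf : f ∈ trigPolySpace Λ) :
    ∃ l : (Fin d → ℤ) →₀ ℂ, (∀ α ∉ Λ, l α = 0) ∧
      ∀ F : Finset (Fin d → ℤ), l.support ⊆ F → f = trigPoly F l := by
  obtain ⟨l, hl, rfl⟩ := (Finsupp.mem_span_image_iff_linearCombination ℂ).1 hf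
  refine ⟨l, fun α hα ↦ Finsupp.notMem_support_iff.1 fun h ↦ hα (hl h), fun F hF ↦ ?_⟩
  funext x
  rw [Finsupp.linearCombination_apply, Finsupp.sum_of_support_subset l hF _ (by simp)]
  simp [trigPoly]

lemma IsContractiveLp.eLpNorm_le_eLpNorm_add {p : ℝ≥0∞} {Λ : Set (Fin d → ℤ)}
    (hΛ : IsContractiveLp d p Λ) {f g : Torus d → ℂ} (hf : f ∈ trigPolySpace Λ)
    (hg : g ∈ trigPolySpace Λᶜ) : eLpNorm f p volume ≤ eLpNorm (f + g) p volume := by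
  obtain ⟨l, hl, hfl⟩ := exists_trigPoly_eq_of_mem_trigPolySpace hf
  obtain ⟨m, hm, hgm⟩ := exists_trigPoly_eq_of_mem_trigPolySpace hg
  have hadd : f + g = trigPoly (l.support ∪ m.support) (l + m) := by
    rw [hfl (l.support ∪ m.support) Finset.subset_union_left,
      hgm (l.support ∪ m.support) Finset.subset_union_right]
    funext x
    simp [trigPoly, add_mul, Finset.sum_add_distrib]
  have hproj : f = trigPoly ((l.support ∪ m.support).filter (· ∈ Λ)) (l + m) := by
    rw [hfl (l.support ∪ m.support) Finset.subset_union_left]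
    funext x
    rw [trigPoly, trigPoly, Finset.sum_filter]
    refine Finset.sum_congr rfl fun α _ ↦ ?_
    split_ifs with hα
    · simp [hm α (not_not.2 hα)]
    · simp [hl α hα]
  rw [hadd]
  nth_rewrite 1 [hproj]
  exact hΛ _ _

lemma IsContractiveLp.integral_norm_rpow_mul_inner_eq_zero {p : ℝ≥0∞} (hp0 : p ≠ 0)
    (hp_top : p ≠ ∞) {Λ : Set (Fin d → ℤ)} (hΛ : IsContractiveLp d p Λ) {f g h : Torus d → ℂ}
    (hf : f ∈ trigPolySpace Λ) (hg : g ∈ trigPolySpace Λ) (hh : h ∈ trigPolySpace Λᶜ)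
    (hf0 : ∀ x, f x ≠ 0) : ∫ x, ‖f x‖ ^ (p.toReal - 2) * ⟪g x, h x⟫_ℝ = 0 := by
  refine integral_norm_rpow_mul_inner_eq_zero_of_complex (continuous_of_mem_trigPolySpace hf)
    (continuous_of_mem_trigPolySpace hg) (continuous_of_mem_trigPolySpace hh) hf0
    (ENNReal.toReal_pos hp0 hp_top).ne' fun s t ↦ ?_
  have hfs : f + s • g ∈ trigPolySpace Λ := add_mem hf (Submodule.smul_mem _ s hg)
  have hth : t • h ∈ trigPolySpace Λᶜ := Submodule.smul_mem _ t hh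
  exact integral_norm_rpow_le_of_eLpNorm_le hp0 hp_top (continuous_of_mem_trigPolySpace hfs)
    ((continuous_of_mem_trigPolySpace hfs).add (continuous_of_mem_trigPolySpace hth))
    (hΛ.eLpNorm_le_eLpNorm_add hfs hth)

lemma IsContractiveLp.add_sub_mem_of_ne_top {p : ℝ≥0∞} (hp0 : p ≠ 0) (hp2 : p ≠ 2)
    (hp_top : p ≠ ∞) {Λ : Set (Fin d → ℤ)} (hΛ : IsContractiveLp d p Λ) {γ α β : Fin d → ℤ}
    (hγ : γ ∈ Λ) (hα : α ∈ Λ) (hβ : β ∈ Λ) : α + β - γ ∈ Λ := by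
  by_contra hη
  have hαγ : α - γ ≠ 0 := by
    intro h
    exact hη (by simpa [sub_eq_zero.1 h] using hβ)
  have hs : (p.toReal - 2) / 2 ≠ 0 := by
    refine div_ne_zero (sub_ne_zero.2 fun h ↦ hp2 ?_) two_ne_zero
    rw [← ENNReal.ofReal_toReal hp_top, h, ENNReal.ofReal_ofNat]
  -- The coefficient `2` keeps `f` zero-free and makes `‖f‖ ^ 2` increase with `Re χ_(α-γ)`.
  let f : Torus d → ℂ := (2 : ℂ) • torusChar γ + torusChar α
  have hf : f ∈ trigPolySpace Λ :=
    add_mem (Submodule.smul_mem _ _ (torusChar_mem_trigPolySpace hγ))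
      (torusChar_mem_trigPolySpace hα)
  have hf_sq (x : Torus d) : ‖f x‖ ^ 2 = 5 + 4 * (torusChar (α - γ) x).re :=
    norm_two_mul_torusChar_add_sq γ α x
  have hf0 (x : Torus d) : f x ≠ 0 := by
    have hre : -1 ≤ (torusChar (α - γ) x).re := (re_torusChar_mem_Icc (α - γ) x).1
    have hpos : 0 < ‖f x‖ ^ 2 := by linarith [hf_sq x]
    exact norm_ne_zero_iff.1 (pow_ne_zero_iff two_ne_zero |>.1 hpos.ne')
  have horth := hΛ.integral_norm_rpow_mul_inner_eq_zero hp0 hp_top hf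
    (torusChar_mem_trigPolySpace hβ) (torusChar_mem_trigPolySpace (Λ := Λᶜ) hη) hf0
  refine integral_rpow_mul_re_torusChar_ne_zero hs hαγ (horth ▸ ?_)
  congr 1
  funext x
  rw [← hf_sq, ← Real.rpow_natCast_mul (norm_nonneg _), inner_torusChar]
  congr 2
  · push_cast; ring
  · congr 1; abel

lemma IsContractiveLp.add_sub_mem_of_top {Λ : Set (Fin d → ℤ)} (hΛ : IsContractiveLp d ∞ Λ)
    {γ α β : Fin d → ℤ} (hγ : γ ∈ Λ) (hα : α ∈ Λ) (hβ : β ∈ Λ) : α + β - γ ∈ Λ := by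
  by_contra hη
  let f : Torus d → ℂ := torusChar γ + torusChar α + torusChar β
  have hf : f ∈ trigPolySpace Λ :=
    add_mem (add_mem (torusChar_mem_trigPolySpace hγ) (torusChar_mem_trigPolySpace hα))
      (torusChar_mem_trigPolySpace hβ)
  have hf_zero : ‖f 0‖ₑ = 3 := by
    have : f 0 = (3 : ℕ) := by
      simp only [f, Pi.add_apply, torusChar_apply_zero]
      norm_num
    rw [this, ← ofReal_norm, Complex.norm_natCast, ENNReal.ofReal_natCast, Nat.cast_ofNat]
  have hsup : eLpNorm (f + -torusChar (α + β - γ)) ∞ volume ≤ ENNReal.ofReal √8 := by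
    rw [eLpNorm_exponent_top]
    refine eLpNormEssSup_le_of_ae_bound (ae_of_all _ fun x ↦ ?_)
    rw [← sub_eq_add_neg]
    exact norm_torusChar_add_add_sub_le γ α β x
  have hle : (3 : ℝ≥0∞) ≤ ENNReal.ofReal √8 :=
    calc (3 : ℝ≥0∞) = ‖f 0‖ₑ := hf_zero.symm
      _ ≤ eLpNorm f ∞ volume :=
        enorm_le_eLpNorm_top_of_continuous (continuous_of_mem_trigPolySpace hf) 0
      _ ≤ eLpNorm (f + -torusChar (α + β - γ)) ∞ volume :=
        hΛ.eLpNorm_le_eLpNorm_add hf (neg_mem (torusChar_mem_trigPolySpace (Λ := Λᶜ) hη))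
      _ ≤ ENNReal.ofReal √8 := hsup
  have hlt : √8 < 3 := (Real.sqrt_lt' (by norm_num)).2 (by norm_num)
  exact hlt.not_ge (by simpa using hle)

lemma IsContractiveLp.add_sub_mem {p : ℝ≥0∞} (hp0 : p ≠ 0) (hp2 : p ≠ 2)
    {Λ : Set (Fin d → ℤ)} (hΛ : IsContractiveLp d p Λ) {γ α β : Fin d → ℤ}
    (hγ : γ ∈ Λ) (hα : α ∈ Λ) (hβ : β ∈ Λ) : α + β - γ ∈ Λ := by
  rcases eq_or_ne p ∞ with rfl | hp_top
  · exact hΛ.add_sub_mem_of_top hγ hα hβ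
  · exact hΛ.add_sub_mem_of_ne_top hp0 hp2 hp_top hγ hα hβ

lemma isCoset_of_add_sub_mem {Λ : Set (Fin d → ℤ)} (hΛ : Λ.Nonempty)
    (h : ∀ γ ∈ Λ, ∀ α ∈ Λ, ∀ β ∈ Λ, α + β - γ ∈ Λ) : IsCoset Λ := by
  obtain ⟨γ, hγ⟩ := hΛ
  let H : AddSubgroup (Fin d → ℤ) :=
    { carrier := {v | γ + v ∈ Λ}
      zero_mem' := by simpa using hγ
      add_mem' := fun {u v} hu hv ↦ by
        have := h γ hγ (γ + u) hu (γ + v) hv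
        rwa [show γ + u + (γ + v) - γ = γ + (u + v) by abel] at this
      neg_mem' := fun {u} hu ↦ by
        have := h (γ + u) hu γ hγ γ hγ
        rwa [show γ + γ - (γ + u) = γ + -u by abel] at this }
  refine ⟨γ, H, Subset.antisymm (fun α hα ↦ ⟨α - γ, ?_, add_sub_cancel γ α⟩) ?_⟩
  · simpa [H] using hα
  · rintro _ ⟨v, hv, rfl⟩
    exact hv

end Contractive

/-- Theorem 1: for `1 ≤ p ≤ ∞`, `p ≠ 2`, a nonempty `Λ ⊆ ℤ^d` is a contractive
projection set for `L^p(𝕋^d)` iff `Λ` is a coset in `ℤ^d`. -/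
theorem contractive_projection_sets_Lp (d : ℕ) (hd : 1 ≤ d) (p : ℝ≥0∞)
    (hp1 : 1 ≤ p) (hp2 : p ≠ 2) (Λ : Set (Fin d → ℤ)) (hΛ : Λ.Nonempty) :
    IsContractiveLp d p Λ ↔ IsCoset Λ := by
  have hp0 : p ≠ 0 := (one_pos.trans_le hp1).ne'
  constructor
  · intro hcontractive
    exact isCoset_of_add_sub_mem hΛ fun γ hγ α hα β hβ ↦
      hcontractive.add_sub_mem hp0 hp2 hγ hα hβ
  · exact IsCoset.isContractiveLp hp1

end
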